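/- arXiv:2506.02319 — 3 statements merged into one kernel-verified Lean document; each statement's English description precedes it below -/
import Mathlib

section
/- Let G be a LERF group acting on an infinite set S with only finitely many orbits of 2-element subsets (i.e., the action is almost 2-transitive). Then there exists a point s ∈ S whose stabiliser in G is not finitely generated. -/
/-!
An almost 2-transitive action on a nontrivial set has finitely many orbits on ordered pairs: every
pair, diagonal or not, can be moved into `B × B` for one of the finitely many 2-element orbit
representatives `B`. Orbits of pairs `(s, g • s)` are double cosets of the stabiliser `H` of `s`,
and a subgroup containing `H` is a union of such double cosets, so `H` has only finitely many
overgroups. If `H` is an intersection of finite-index subgroups, then this intersection is finite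
and `H` itself has finite index. Were all stabilisers of this kind, all orbits would be finite, and
there are finitely many of them, so `S` would be finite.
-/

open Pointwise

/-- A group is LERF if every finitely generated subgroup equals the intersection of all
finite-index subgroups containing it. -/
def IsLERF (G : Type*) [Group G] : Prop :=
  ∀ H : Subgroup G, H.FG → H = sInf {K : Subgroup G | H ≤ K ∧ K.FiniteIndex}

/-- Separability of a subgroup (closedness in the profinite topology), the condition which LERF
imposes on all finitely generated subgroups. -/
def IsSeparableSubgroup {G : Type*} [Group G] (H : Subgroup G) : Prop :=
  H = sInf {K : Subgroup G | H ≤ K ∧ K.FiniteIndex}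

/-- Almost 2-transitivity of an action: finitely many sets, among them representatives of all
orbits of 2-element subsets. The finite family may contain sets of other sizes as well. -/
def IsAlmostTwoTransitive (G S : Type*) [Group G] [MulAction G S] : Prop :=
  ∃ T : Set (Set S), T.Finite ∧ ∀ A : Set S, A.ncard = 2 → ∃ B ∈ T, ∃ g : G, g • B = A

section Subgroup

variable {G : Type*} [Group G] {H K L : Subgroup G}

theorem le_of_doubleCoset_mk_image_subset (hL : H ≤ L)
    (hKL : DoubleCoset.mk H H '' K ⊆ DoubleCoset.mk H H '' L) : K ≤ L := by
  intro k hk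
  obtain ⟨l, hl, hlk⟩ := hKL ⟨k, hk, rfl⟩
  obtain ⟨a, ha, b, hb, rfl⟩ := (DoubleCoset.eq H H l k).mp hlk
  exact L.mul_mem (L.mul_mem (hL ha) hl) (hL hb)

theorem finite_Ici_of_finite_doubleCoset_quotient
    [Finite (DoubleCoset.Quotient (H : Set G) H)] : (Set.Ici H).Finite := by
  refine Set.Finite.of_finite_image (f := fun K : Subgroup G ↦ DoubleCoset.mk H H '' K)
    (Set.toFinite _) fun K hK L hL hKL ↦ le_antisymm ?_ ?_
  · exact le_of_doubleCoset_mk_image_subset hL hKL.subset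
  · exact le_of_doubleCoset_mk_image_subset hK hKL.superset

theorem IsSeparableSubgroup.finiteIndex_of_finite_Ici (hH : IsSeparableSubgroup H)
    (hfin : (Set.Ici H).Finite) : H.FiniteIndex := by
  have : Finite {K : Subgroup G | H ≤ K ∧ K.FiniteIndex} := hfin.subset fun _ hK ↦ hK.1
  rw [hH, sInf_eq_iInf']
  exact Subgroup.finiteIndex_iInf fun K ↦ K.2.2

end Subgroup

section MulAction

open MulAction

variable {G S X Y : Type*} [Group G] [MulAction G S] [MulAction G X] [MulAction G Y]

theorem finite_orbitRel_quotient_of_finite_set {P : Set X} (hP : P.Finite)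
    (h : ∀ x, ∃ p ∈ P, ∃ g : G, g • p = x) : Finite (orbitRel.Quotient G X) := by
  have := hP.to_subtype
  refine Finite.of_surjective (fun p : P ↦ (Quotient.mk'' p.1 : orbitRel.Quotient G X)) ?_
  rintro ⟨x⟩
  obtain ⟨p, hp, g, hg⟩ := h x
  exact ⟨⟨p, hp⟩, (Quotient.sound (orbitRel_apply.mpr ⟨g, hg⟩)).symm⟩

theorem finite_orbitRel_quotient_of_surjective {f : X →[G] Y} (hf : Function.Surjective f)
    [Finite (orbitRel.Quotient G X)] : Finite (orbitRel.Quotient G Y) := by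
  let F : orbitRel.Quotient G X → orbitRel.Quotient G Y := Quotient.map' f <| by
    rintro _ x ⟨g, rfl⟩
    exact ⟨g, (map_smul f g x).symm⟩
  refine Finite.of_surjective F ?_
  rintro ⟨y⟩
  obtain ⟨x, rfl⟩ := hf y
  exact ⟨Quotient.mk'' x, rfl⟩

theorem finite_doubleCoset_quotient_stabilizer [Finite (orbitRel.Quotient G (X × Y))]
    (x : X) (y : Y) :
    Finite (DoubleCoset.Quotient (stabilizer G x : Set G) (stabilizer G y)) := by
  let F : DoubleCoset.Quotient (stabilizer G x : Set G) (stabilizer G y) →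
      orbitRel.Quotient G (X × Y) := fun q ↦ Quotient.mk'' (x, q.out • y)
  refine Finite.of_injective F fun p q hpq ↦ ?_
  obtain ⟨g, hg⟩ := orbitRel_apply.mp (Quotient.exact hpq)
  obtain ⟨hgx : g • x = x, hgy : g • q.out • y = p.out • y⟩ := Prod.ext_iff.mp hg
  rw [← DoubleCoset.out_eq' _ _ p, ← DoubleCoset.out_eq' _ _ q, eq_comm, DoubleCoset.eq]
  refine ⟨g, hgx, (g * q.out)⁻¹ * p.out, ?_, by group⟩
  rw [mem_stabilizer_iff, mul_smul, inv_smul_eq_iff, mul_smul, hgy]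

theorem finite_of_finiteIndex_stabilizer [Finite (orbitRel.Quotient G X)]
    (h : ∀ x : X, (stabilizer G x).FiniteIndex) : Finite X :=
  have (ω : orbitRel.Quotient G X) : (stabilizer G ω.out).FiniteIndex := h ω.out
  Finite.of_equiv _ (selfEquivSigmaOrbitsQuotientStabilizer G X).symm

theorem IsAlmostTwoTransitive.finite_orbitRel_quotient_prod [Nontrivial S]
    (h : IsAlmostTwoTransitive G S) : Finite (orbitRel.Quotient G (S × S)) := by
  obtain ⟨T, hT, hrep⟩ := h
  have hfin : (⋃ B ∈ {B ∈ T | B.Finite}, B ×ˢ B).Finite :=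
    (hT.subset (Set.sep_subset _ _)).biUnion fun B hB ↦ hB.2.prod hB.2
  refine finite_orbitRel_quotient_of_finite_set (G := G) hfin fun ⟨x, y⟩ ↦ ?_
  obtain ⟨A, hA, hx, hy⟩ : ∃ A : Set S, A.ncard = 2 ∧ x ∈ A ∧ y ∈ A := by
    obtain rfl | hxy := eq_or_ne x y
    · obtain ⟨z, hz⟩ := exists_ne x
      exact ⟨{x, z}, Set.ncard_pair hz.symm, by simp, by simp⟩
    · exact ⟨{x, y}, Set.ncard_pair hxy, by simp, by simp⟩
  have hAfin : A.Finite := Set.finite_of_ncard_ne_zero (by lia)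
  obtain ⟨B, hB, g, rfl⟩ := hrep A hA
  obtain ⟨b, hb, rfl⟩ := hx
  obtain ⟨c, hc, rfl⟩ := hy
  exact ⟨(b, c), Set.mem_biUnion ⟨hB, Set.finite_smul_set.mp hAfin⟩ ⟨hb, hc⟩, g, rfl⟩

end MulAction

theorem lerf_almost_two_transitive_exists_stabilizer_not_fg_general
    {G S : Type*} [Group G] [MulAction G S] [Infinite S] (h2 : IsAlmostTwoTransitive G S) :
    ∃ s : S, ¬ IsSeparableSubgroup (MulAction.stabilizer G s) := by
  by_contra! hsep
  have := h2.finite_orbitRel_quotient_prod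
  have : Finite (MulAction.orbitRel.Quotient G S) :=
    finite_orbitRel_quotient_of_surjective (f := MulActionHom.fst G S S) Prod.fst_surjective
  have hindex (s : S) : (MulAction.stabilizer G s).FiniteIndex :=
    have := finite_doubleCoset_quotient_stabilizer (G := G) s s
    (hsep s).finiteIndex_of_finite_Ici finite_Ici_of_finite_doubleCoset_quotient
  have : Finite S := finite_of_finiteIndex_stabilizer hindex
  exact not_finite S

/-- **Lemma (LERF, almost 2-transitive actions).**
If a LERF group `G` acts on an infinite set `S` with only finitely many orbits of
2-element subsets, then some point of `S` has a stabiliser that is not finitely generated. -/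
theorem lerf_almost_two_transitive_exists_stabilizer_not_fg
    {G S : Type*} [Group G] [MulAction G S] [Infinite S]
    (hG : IsLERF G)
    (h2 : ∃ T : Set (Set S), T.Finite ∧
      ∀ A : Set S, A.ncard = 2 → ∃ B ∈ T, ∃ g : G, g • B = A) :
    ∃ s : S, ¬ (MulAction.stabilizer G s).FG := by
  obtain ⟨s, hs⟩ := lerf_almost_two_transitive_exists_stabilizer_not_fg_general h2
  exact ⟨s, fun hfg ↦ hs (hG _ hfg)⟩
end

section
/- Let G be a LERF group acting transitively on an infinite set S with only finitely many orbits of 2-element subsets. Then for every point s ∈ S, the stabiliser of s in G is not finitely generated. -/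
open Pointwise

section

variable {G : Type*} [Group G] {H : Subgroup G}

theorem IsSeparableSubgroup.exists_finiteIndex_notMem (hH : IsSeparableSubgroup H) {g : G}
    (hg : g ∉ H) : ∃ K : Subgroup G, H ≤ K ∧ K.FiniteIndex ∧ g ∉ K := by
  rw [hH, Subgroup.mem_sInf] at hg
  push Not at hg
  obtain ⟨K, ⟨hHK, hK⟩, hgK⟩ := hg
  exact ⟨K, hHK, hK, hgK⟩

theorem mem_iff_mem_of_doubleCoset_mk_eq {L K : Subgroup G} (hHK : H ≤ K) (hLK : L ≤ K) {a b : G}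
    (hab : DoubleCoset.mk H L a = DoubleCoset.mk H L b) : a ∈ K ↔ b ∈ K := by
  obtain ⟨h, hh, l, hl, rfl⟩ := (DoubleCoset.eq H L a b).mp hab
  rw [K.mul_mem_cancel_right (hLK hl), K.mul_mem_cancel_left (hHK hh)]

theorem IsSeparableSubgroup.finiteIndex [Finite (DoubleCoset.Quotient (H : Set G) (H : Set G))]
    (hH : IsSeparableSubgroup H) : H.FiniteIndex := by
  have exists_avoiding (g : G) : ∃ K : Subgroup G, H ≤ K ∧ K.FiniteIndex ∧ (g ∈ K → g ∈ H) := by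
    by_cases hg : g ∈ H
    · exact ⟨⊤, le_top, inferInstance, fun _ ↦ hg⟩
    · obtain ⟨K, hHK, hK, hgK⟩ := hH.exists_finiteIndex_notMem hg
      exact ⟨K, hHK, hK, fun h ↦ absurd h hgK⟩
  choose K hHK hK avoids using exists_avoiding
  let L : Subgroup G := ⨅ q : DoubleCoset.Quotient (H : Set G) (H : Set G), K q.out
  have hL : L.FiniteIndex := Subgroup.finiteIndex_iInf fun q ↦ hK q.out
  have hLH : L ≤ H := by
    intro g hg
    let t : G := (DoubleCoset.mk H H g).out
    have ht : DoubleCoset.mk H H t = DoubleCoset.mk H H g := DoubleCoset.out_eq' H H _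
    have hgK : g ∈ K t := Subgroup.mem_iInf.mp hg _
    have htH : t ∈ H :=
      avoids t ((mem_iff_mem_of_doubleCoset_mk_eq (hHK t) (hHK t) ht).mpr hgK)
    exact (mem_iff_mem_of_doubleCoset_mk_eq le_rfl le_rfl ht).mp htH
  exact Subgroup.finiteIndex_of_le hLH

end

section

open MulAction

variable {G S : Type*} [Group G] [MulAction G S] {s : S}

theorem doubleCoset_stabilizer_mk_eq_of_smul {a b k : G} (hs : k • s = s)
    (hk : k • b • s = a • s) :
    DoubleCoset.mk (stabilizer G s) (stabilizer G s) a =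
      DoubleCoset.mk (stabilizer G s) (stabilizer G s) b := by
  refine ((DoubleCoset.eq _ _ b a).mpr ⟨k, hs, (k * b)⁻¹ * a, ?_, by group⟩).symm
  rw [mem_stabilizer_iff, mul_smul, inv_smul_eq_iff, mul_smul, hk]

theorem doubleCoset_stabilizer_mk_eq_or_eq_inv {a b k : G}
    (hk : k • ({s, b • s} : Set S) = {s, a • s}) :
    DoubleCoset.mk (stabilizer G s) (stabilizer G s) a =
        DoubleCoset.mk (stabilizer G s) (stabilizer G s) b ∨
      DoubleCoset.mk (stabilizer G s) (stabilizer G s) a =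
        DoubleCoset.mk (stabilizer G s) (stabilizer G s) b⁻¹ := by
  rw [Set.smul_set_insert, Set.smul_set_singleton] at hk
  obtain ⟨hs, ha⟩ | ⟨ha, hs⟩ := Set.pair_eq_pair_iff.mp hk
  · exact .inl (doubleCoset_stabilizer_mk_eq_of_smul hs ha)
  · refine .inr (doubleCoset_stabilizer_mk_eq_of_smul (k := k * b) ?_ ?_)
    · rw [mul_smul, hs]
    · rw [smul_smul, mul_inv_cancel_right, ha]

theorem finite_image_doubleCoset_mk_of_pair_mem_orbit (B : Set S) :
    (DoubleCoset.mk (stabilizer G s) (stabilizer G s) ''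
      {g : G | {s, g • s} ∈ orbit G B}).Finite := by
  by_cases hB : ∃ b : G, {s, b • s} ∈ orbit G B
  · obtain ⟨b, hb⟩ := hB
    refine (Set.toFinite {DoubleCoset.mk (stabilizer G s) (stabilizer G s) b,
      DoubleCoset.mk (stabilizer G s) (stabilizer G s) b⁻¹}).subset ?_
    rintro _ ⟨a, ha, rfl⟩
    obtain ⟨k, hk⟩ : {s, a • s} ∈ orbit G {s, b • s} := by rwa [orbit_eq_iff.mpr hb]
    exact doubleCoset_stabilizer_mk_eq_or_eq_inv hk
  · have hempty : {g : G | {s, g • s} ∈ orbit G B} = ∅ :=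
      Set.eq_empty_of_forall_notMem fun a ha ↦ hB ⟨a, ha⟩
    rw [hempty, Set.image_empty]
    exact Set.finite_empty

theorem finite_doubleCoset_quotient_stabilizer_s1
    (h2 : ∃ T : Set (Set S), T.Finite ∧
      ∀ A ⊆ orbit G s, A.ncard = 2 → ∃ B ∈ T, ∃ g : G, g • B = A) :
    Finite (DoubleCoset.Quotient (stabilizer G s : Set G) (stabilizer G s : Set G)) := by
  obtain ⟨T, hT, h2⟩ := h2
  have hfinite := (hT.biUnion fun B _ ↦
    finite_image_doubleCoset_mk_of_pair_mem_orbit (G := G) (s := s) B).insert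
      (DoubleCoset.mk (stabilizer G s) (stabilizer G s) 1)
  refine Set.finite_univ_iff.mp (hfinite.subset fun q _ ↦ ?_)
  obtain ⟨g, rfl⟩ := Quotient.exists_rep q
  by_cases hg : g • s = s
  · exact .inl (doubleCoset_stabilizer_mk_eq_of_smul hg (by rw [one_smul]))
  · have hpair : ({s, g • s} : Set S) ⊆ orbit G s :=
      Set.pair_subset (mem_orbit_self s) (mem_orbit s g)
    obtain ⟨B, hBT, hB⟩ := h2 _ hpair (Set.ncard_pair (Ne.symm hg))
    exact .inr (Set.mem_biUnion hBT ⟨g, hB, rfl⟩)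

theorem lerf_transitive_almost_two_transitive_stabilizer_not_fg_general
    (hs : (orbit G s).Infinite)
    (h2 : ∃ T : Set (Set S), T.Finite ∧
      ∀ A ⊆ orbit G s, A.ncard = 2 → ∃ B ∈ T, ∃ g : G, g • B = A) :
    ¬ IsSeparableSubgroup (stabilizer G s) := by
  intro hsep
  have := finite_doubleCoset_quotient_stabilizer_s1 h2
  have hindex := hsep.finiteIndex.index_ne_zero
  rw [index_stabilizer] at hindex
  exact hindex hs.ncard

end

/-- **Lemma (LERF, transitive almost 2-transitive actions).**
If a LERF group `G` acts transitively on an infinite set `S` with only finitely many orbits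
of 2-element subsets, then the stabiliser of every point of `S` is not finitely generated. -/
theorem lerf_transitive_almost_two_transitive_stabilizer_not_fg
    {G S : Type*} [Group G] [MulAction G S] [Infinite S]
    [MulAction.IsPretransitive G S]
    (hG : IsLERF G)
    (h2 : ∃ T : Set (Set S), T.Finite ∧
      ∀ A : Set S, A.ncard = 2 → ∃ B ∈ T, ∃ g : G, g • B = A) :
    ∀ s : S, ¬ (MulAction.stabilizer G s).FG :=
  fun s hs ↦ lerf_transitive_almost_two_transitive_stabilizer_not_fg_general
    (MulAction.orbit_eq_univ G s ▸ Set.infinite_univ)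
    (h2.imp fun _ ⟨hT, h⟩ ↦ ⟨hT, fun A _ ↦ h A⟩) (hG _ hs)
end

section
/- Let B be an infinite group generated by a finite subset T. Then there exist a map ρ : B → ℤ and a sequence x : ℤ → B such that: x(0) = 1; for every n ∈ ℤ, x(n)⁻¹ · x(n+1) ∈ T ∪ T⁻¹; ρ(x(n)) = n for every n ∈ ℤ; and |ρ(b·t) − ρ(b)| ≤ 1 for every b ∈ B and every t ∈ T ∪ T⁻¹. (That is, ρ is a 1-Lipschitz quasi-retraction of B onto ℤ with respect to the word metric of T, admitting the honest geodesic section n ↦ x(n).) -/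
open Pointwise

/-!
A vertex-transitive, locally finite, connected infinite graph contains arbitrarily long geodesic
segments, and transitivity allows each of them to be moved so that its midpoint is a given vertex.
Local finiteness then makes a subsequence (here: an ultralimit) of these centred segments converge
pointwise to a bi-infinite geodesic `x`. The inverse `x n ↦ n` is 1-Lipschitz on the image of `x`,
so McShane's formula `u ↦ ⨅ n, n + d(x n, u)` extends it to a 1-Lipschitz retraction of the whole
graph. The theorem is the case of a Cayley graph.
-/

section Geodesic

open SimpleGraph

variable {V : Type*} {G : SimpleGraph V}

theorem dist_apply_iso {W : Type*} {H : SimpleGraph W} (φ : G ≃g H) (hG : G.Connected) (u v : V) :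
    H.dist (φ u) (φ v) = G.dist u v := by
  have hH : H.Connected := φ.connected_iff.mp hG
  apply le_antisymm
  · obtain ⟨p, hp⟩ := hG.exists_walk_length_eq_dist u v
    simpa [hp] using H.dist_le (p.map φ.toHom)
  · obtain ⟨q, hq⟩ := hH.exists_walk_length_eq_dist (φ u) (φ v)
    simpa [hq] using G.dist_le (q.map φ.symm.toHom)

variable (G) in
theorem finite_setOf_walk_length_le [G.LocallyFinite] (v : V) (n : ℕ) :
    {w | ∃ p : G.Walk v w, p.length ≤ n}.Finite := by
  induction n generalizing v with
  | zero =>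
    refine (Set.finite_singleton v).subset ?_
    rintro w ⟨p, hp⟩
    exact (Walk.eq_of_length_eq_zero (Nat.le_zero.mp hp)).symm
  | succ n ih =>
    refine ((Set.finite_singleton v).union
      ((G.neighborSet v).toFinite.biUnion fun u _ ↦ ih u)).subset ?_
    rintro w ⟨_ | ⟨hvu, p⟩, hp⟩
    · exact Or.inl rfl
    · exact Or.inr (Set.mem_biUnion hvu ⟨p, Nat.le_of_succ_le_succ hp⟩)

theorem finite_setOf_dist_le [G.LocallyFinite] (hG : G.Connected) (v : V) (n : ℕ) :
    {w | G.dist v w ≤ n}.Finite := by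
  refine (finite_setOf_walk_length_le G v n).subset fun w hw ↦ ?_
  obtain ⟨p, hp⟩ := hG.exists_walk_length_eq_dist v w
  exact ⟨p, hp.trans_le hw⟩

theorem exists_lt_dist [Infinite V] [G.LocallyFinite] (hG : G.Connected) (v : V) (n : ℕ) :
    ∃ w, n < G.dist v w := by
  simpa using (finite_setOf_dist_le hG v n).exists_notMem

theorem dist_getVert_add {u v : V} {p : G.Walk u v} (hp : p.length = G.dist u v) {i d : ℕ}
    (h : i + d ≤ p.length) : G.dist (p.getVert i) (p.getVert (i + d)) = d := by
  have hsub : ((p.drop i).take d).IsSubwalk p :=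
    ((p.drop i).isSubwalk_take d).trans (p.isSubwalk_drop i)
  have hdist := length_eq_dist_of_subwalk hp hsub
  rw [Walk.take_length, Walk.drop_length, Walk.drop_getVert] at hdist
  omega

/-- The map `x` is an isometric embedding of `s ⊆ ℤ` into the graph `G` with its path metric: a
geodesic segment when `s` is an interval, a bi-infinite geodesic when `s = Set.univ`. -/
def IsGeodesicOn (G : SimpleGraph V) (x : ℤ → V) (s : Set ℤ) : Prop :=
  ∀ m ∈ s, ∀ n ∈ s, (G.dist (x m) (x n) : ℤ) = |m - n|

theorem IsGeodesicOn.adj_add_one {x : ℤ → V} (hx : IsGeodesicOn G x Set.univ) (n : ℤ) :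
    G.Adj (x n) (x (n + 1)) := by
  have h := hx n trivial (n + 1) trivial
  rw [← dist_eq_one_iff_adj]
  simpa using h

theorem exists_isGeodesicOn_Icc [Infinite V] [G.LocallyFinite]
    [MulAction.IsPretransitive (G ≃g G) V] (hG : G.Connected) (v : V) (k : ℕ) :
    ∃ x : ℤ → V, x 0 = v ∧ IsGeodesicOn G x (Set.Icc (-k) k) := by
  obtain ⟨w, hw⟩ := exists_lt_dist hG v (2 * k)
  obtain ⟨p, hp⟩ := hG.exists_walk_length_eq_dist v w
  obtain ⟨φ, hφ⟩ := MulAction.exists_smul_eq (G ≃g G) (p.getVert k) v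
  refine ⟨fun n ↦ φ (p.getVert (n + k).toNat), by simpa using hφ, ?_⟩
  have dist_of_le {m n : ℤ} (hm : -k ≤ m) (hmn : m ≤ n) (hn : n ≤ k) :
      (G.dist (p.getVert (m + k).toNat) (p.getVert (n + k).toNat) : ℤ) = |m - n| := by
    obtain ⟨d, rfl⟩ := Int.le.dest hmn
    have hsplit : (m + d + k).toNat = (m + k).toNat + d := by omega
    rw [hsplit, dist_getVert_add hp (by omega)]
    simp
  rintro m ⟨hm, hm'⟩ n ⟨hn, hn'⟩
  rw [dist_apply_iso φ hG]
  rcases le_total m n with hmn | hnm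
  · exact dist_of_le hm hmn hn'
  · rw [dist_comm, abs_sub_comm]
    exact dist_of_le hn hnm hm'

theorem exists_forall_eventually_eq_of_finite {ι κ α : Type*} (U : Ultrafilter κ)
    {F : ι → Set α} (hF : ∀ i, (F i).Finite) {f : κ → ι → α}
    (hf : ∀ i, ∀ᶠ k in (U : Filter κ), f k i ∈ F i) :
    ∃ g : ι → α, ∀ i, ∀ᶠ k in (U : Filter κ), f k i = g i := by
  have hlim (i : ι) : ∃ a ∈ F i, ∀ᶠ k in (U : Filter κ), f k i = a :=
    (Ultrafilter.eventually_exists_mem_iff (hF i)).mp ((hf i).mono fun k hk ↦ ⟨f k i, hk, rfl⟩)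
  choose g _ hg using hlim
  exact ⟨g, hg⟩

theorem exists_isGeodesicOn_univ_of_forall_Icc [G.LocallyFinite] (hG : G.Connected) {v : V}
    (h : ∀ k : ℕ, ∃ x : ℤ → V, x 0 = v ∧ IsGeodesicOn G x (Set.Icc (-k) k)) :
    ∃ x : ℤ → V, x 0 = v ∧ IsGeodesicOn G x Set.univ := by
  choose y hy₀ hy using h
  let U : Ultrafilter ℕ := Filter.hyperfilter ℕ
  have eventually_mem (n : ℤ) : ∀ᶠ k : ℕ in (U : Filter ℕ), n ∈ Set.Icc (-k : ℤ) k := by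
    refine Filter.Eventually.filter_mono Nat.hyperfilter_le_atTop ?_
    filter_upwards [Filter.eventually_ge_atTop n.natAbs] with k hk
    exact ⟨by omega, by omega⟩
  have eventually_mem_ball (n : ℤ) :
      ∀ᶠ k in (U : Filter ℕ), y k n ∈ {w | G.dist v w ≤ n.natAbs} := by
    filter_upwards [eventually_mem 0, eventually_mem n] with k h₀ hn
    have hdist := hy k 0 h₀ n hn
    rw [hy₀, zero_sub, abs_neg, Int.abs_eq_natAbs] at hdist
    exact (Nat.cast_injective hdist).le
  obtain ⟨x, hx⟩ := exists_forall_eventually_eq_of_finite U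
    (fun n : ℤ ↦ finite_setOf_dist_le hG v n.natAbs) eventually_mem_ball
  refine ⟨x, ?_, fun m _ n _ ↦ ?_⟩
  · obtain ⟨k, hk⟩ := (hx 0).exists
    rw [← hk, hy₀]
  · obtain ⟨k, ⟨hm, hn⟩, hkm, hkn⟩ :=
      (((eventually_mem m).and (eventually_mem n)).and ((hx m).and (hx n))).exists
    rw [← hkm, ← hkn, hy k m hm n hn]

theorem exists_isGeodesicOn_univ [Infinite V] [G.LocallyFinite]
    [MulAction.IsPretransitive (G ≃g G) V] (hG : G.Connected) (v : V) :
    ∃ x : ℤ → V, x 0 = v ∧ IsGeodesicOn G x Set.univ :=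
  exists_isGeodesicOn_univ_of_forall_Icc hG (exists_isGeodesicOn_Icc hG v)

theorem exists_lipschitz_extension {ι : Type*} [Nonempty ι] (hG : G.Connected) {x : ι → V}
    {f : ι → ℤ} (hf : ∀ i j, f i - f j ≤ G.dist (x i) (x j)) :
    ∃ ρ : V → ℤ, (∀ i, ρ (x i) = f i) ∧ ∀ u v, |ρ u - ρ v| ≤ G.dist u v := by
  have triangle (u v w : V) : (G.dist u w : ℤ) ≤ G.dist u v + G.dist v w :=
    mod_cast hG.dist_triangle
  let i₀ : ι := Classical.arbitrary ι
  have bddBelow (u : V) : BddBelow (Set.range fun i ↦ f i + (G.dist (x i) u : ℤ)) := by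
    refine ⟨f i₀ - G.dist u (x i₀), ?_⟩
    rintro _ ⟨i, rfl⟩
    have hfi := hf i₀ i
    have htri := triangle (x i) u (x i₀)
    rw [G.dist_comm] at hfi
    linarith
  let ρ (u : V) : ℤ := ⨅ i, f i + (G.dist (x i) u : ℤ)
  have le_add_dist (u v : V) : ρ u ≤ ρ v + G.dist u v := by
    rw [← sub_le_iff_le_add]
    refine le_ciInf fun i ↦ ?_
    have hi : ρ u ≤ f i + G.dist (x i) u := ciInf_le (bddBelow u) i
    have htri := triangle (x i) v u
    rw [G.dist_comm (u := v)] at htri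
    linarith
  refine ⟨ρ, fun j ↦ le_antisymm ?_ ?_, fun u v ↦ abs_le.mpr ⟨?_, ?_⟩⟩
  · exact (ciInf_le (bddBelow (x j)) j).trans_eq (by simp)
  · refine le_ciInf fun i ↦ ?_
    rw [← sub_le_iff_le_add', G.dist_comm]
    exact hf j i
  · have h := le_add_dist v u
    rw [G.dist_comm] at h
    linarith
  · linarith [le_add_dist u v]

theorem IsGeodesicOn.exists_retraction (hG : G.Connected) {x : ℤ → V}
    (hx : IsGeodesicOn G x Set.univ) :
    ∃ ρ : V → ℤ, (∀ n, ρ (x n) = n) ∧ ∀ u v, |ρ u - ρ v| ≤ G.dist u v :=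
  exists_lipschitz_extension hG fun m n ↦
    (le_abs_self (m - n)).trans_eq (hx m trivial n trivial).symm

theorem exists_quasiRetraction_to_int_general [Infinite V] [G.LocallyFinite]
    [MulAction.IsPretransitive (G ≃g G) V] (hG : G.Connected) (v : V) :
    ∃ (ρ : V → ℤ) (x : ℤ → V),
      x 0 = v ∧
      (∀ n, G.Adj (x n) (x (n + 1))) ∧
      (∀ n, ρ (x n) = n) ∧
      (∀ u w, |ρ u - ρ w| ≤ G.dist u w) := by
  obtain ⟨x, hx₀, hx⟩ := exists_isGeodesicOn_univ hG v
  obtain ⟨ρ, hρx, hρ⟩ := hx.exists_retraction hG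
  exact ⟨ρ, x, hx₀, hx.adj_add_one, hρx, hρ⟩

end Geodesic

section CayleyGraph

open SimpleGraph

variable {B : Type*} [Group B] {S : Set B}

theorem mulCayley_adj_iff_mem_union_inv {u v : B} :
    (mulCayley S).Adj u v ↔ u ≠ v ∧ u⁻¹ * v ∈ S ∪ S⁻¹ := by
  simp [mulCayley_adj]

theorem edist_mulCayley_mul_right_le_one (b : B) {t : B} (ht : t ∈ S ∪ S⁻¹) :
    (mulCayley S).edist b (b * t) ≤ 1 := by
  rw [edist_le_one_iff_adj_or_eq, mulCayley_adj_iff_mem_union_inv, inv_mul_cancel_left]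
  tauto

theorem dist_mulCayley_mul_right_le_one (b : B) {t : B} (ht : t ∈ S ∪ S⁻¹) :
    (mulCayley S).dist b (b * t) ≤ 1 :=
  ENat.toNat_le_of_le_natCast (edist_mulCayley_mul_right_le_one b ht)

theorem connected_mulCayley (hS : Subgroup.closure S = ⊤) : (mulCayley S).Connected := by
  have reachable_mul (b : B) {t : B} (ht : t ∈ S ∪ S⁻¹) : (mulCayley S).Reachable b (b * t) :=
    reachable_of_edist_ne_top
      ((edist_mulCayley_mul_right_le_one b ht).trans_lt ENat.one_lt_top).ne
  rw [connected_iff_exists_forall_reachable]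
  refine ⟨1, fun b ↦ ?_⟩
  have hb : b ∈ Subgroup.closure S := hS ▸ Subgroup.mem_top b
  induction hb using Subgroup.closure_induction_right with
  | one => rfl
  | mul_right b _ t ht ih => exact ih.trans (reachable_mul b (Or.inl ht))
  | mul_inv_cancel b _ t ht ih =>
    exact ih.trans (reachable_mul b (Or.inr (Set.inv_mem_inv.mpr ht)))

theorem finite_neighborSet_mulCayley (hS : S.Finite) (b : B) :
    ((mulCayley S).neighborSet b).Finite :=
  ((hS.union hS.inv).image (b * ·)).subset fun v hv ↦
    ⟨b⁻¹ * v, (mulCayley_adj_iff_mem_union_inv.mp hv).2, mul_inv_cancel_left b v⟩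

instance isPretransitive_mulCayley_iso :
    MulAction.IsPretransitive (mulCayley S ≃g mulCayley S) B where
  exists_smul_eq u v :=
    ⟨⟨Equiv.mulLeft (v * u⁻¹), mulCayley_adj_mul_iff_right⟩, inv_mul_cancel_right v u⟩

end CayleyGraph

/-- **Proposition (Bodart).**
Every infinite group `B` with a finite generating set `T` admits a 1-Lipschitz
quasi-retraction `ρ : B → ℤ` (for the word metric of `T`) with an honest geodesic section
`n ↦ x n`. -/
theorem exists_quasiRetraction_to_int
    {B : Type*} [Group B] [Infinite B] (T : Finset B)
    (hT : Subgroup.closure (T : Set B) = ⊤) :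
    ∃ (ρ : B → ℤ) (x : ℤ → B),
      x 0 = 1 ∧
      (∀ n : ℤ, (x n)⁻¹ * x (n + 1) ∈ (T : Set B) ∪ (T : Set B)⁻¹) ∧
      (∀ n : ℤ, ρ (x n) = n) ∧
      (∀ b : B, ∀ t ∈ (T : Set B) ∪ (T : Set B)⁻¹, |ρ (b * t) - ρ b| ≤ 1) := by
  let _ : (SimpleGraph.mulCayley (T : Set B)).LocallyFinite :=
    fun b ↦ (finite_neighborSet_mulCayley T.finite_toSet b).fintype
  obtain ⟨ρ, x, hx₀, hadj, hρx, hρ⟩ :=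
    exists_quasiRetraction_to_int_general (connected_mulCayley hT) 1
  refine ⟨ρ, x, hx₀, fun n ↦ (mulCayley_adj_iff_mem_union_inv.mp (hadj n)).2, hρx,
    fun b t ht ↦ ?_⟩
  rw [abs_sub_comm]
  exact (hρ b (b * t)).trans (mod_cast dist_mulCayley_mul_right_le_one b ht)
end
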